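/- Let A, B be integers and let p be an odd prime not dividing B·Δ, where Δ = A^2 − 4B. Then u_p(A,B) ≡ (A/2)·B^{((Δ/p)−1)/2}·u_{p−(Δ/p)}(A,B) + (Δ/p)·(B^{p−1}+1)/2 (mod p^2), where the congruence is between rational numbers whose denominators are coprime to p (i.e., it holds in the localization ℤ_(p)). -/

import Mathlib

/-- `x ≡ y (mod p^n)` as rational numbers, i.e. in the localization `ℤ_(p)`. -/
def ratModCast (p n : ℕ) (x y : ℚ) : Prop :=
  ∃ z : ℚ, x - y = (p : ℚ) ^ n * z ∧ ¬ (p ∣ z.den)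

/-- The Lucas sequence `u_n(A,B)`: `u_0 = 0`, `u_1 = 1`, `u_{n+1} = A·u_n − B·u_{n−1}`. -/
def lucasU (A B : ℤ) : ℕ → ℤ
  | 0 => 0
  | 1 => 1
  | n + 2 => A * lucasU A B (n + 1) - B * lucasU A B n

theorem lucasU_quad (A B : ℤ) (n : ℕ) :
    lucasU A B (n+1) ^ 2 - A * lucasU A B n * lucasU A B (n+1) + B * lucasU A B n ^ 2 = B ^ n := by
  induction n with
  | zero => simp [lucasU]
  | succ k ih =>
    have h : lucasU A B (k+1+1) = A * lucasU A B (k + 1) - B * lucasU A B k := rfl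
    rw [h]; linear_combination B * ih

theorem lucasU_omega (A B : ℤ) (p : ℕ) (n : ℕ) :
    (⟨0, 1⟩ : QuadraticAlgebra (ZMod p) (-(B : ZMod p)) (A : ZMod p)) ^ (n+1)
      = ⟨-(B : ZMod p) * (lucasU A B n : ZMod p), (lucasU A B (n+1) : ZMod p)⟩ := by
  induction n with
  | zero => simp [lucasU]
  | succ k ih =>
    have h : lucasU A B (k+1+1) = A * lucasU A B (k + 1) - B * lucasU A B k := rfl
    rw [h, pow_succ, ih]
    ext
    · simp
    · simp; ring

theorem lucasU_mod (A B : ℤ) (p : ℕ) [Fact p.Prime] (hp2 : p ≠ 2) (m : ℕ) (hm : p = m + 1) :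
    (lucasU A B p : ZMod p) = (jacobiSym (A ^ 2 - 4 * B) p : ZMod p) ∧
    2 * (B : ZMod p) * (lucasU A B m : ZMod p)
      = A * ((jacobiSym (A ^ 2 - 4 * B) p : ZMod p) - 1) := by
  have hp : p.Prime := Fact.out
  have h2 : (2 : ZMod p) ≠ 0 := by
    intro h
    have : ((2 : ℕ) : ZMod p) = 0 := by exact_mod_cast h
    rw [ZMod.natCast_eq_zero_iff] at this
    exact hp2 ((Nat.prime_dvd_prime_iff_eq hp Nat.prime_two).1 this)
  have heul := legendreSym.eq_pow p (A ^ 2 - 4 * B)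
  rw [jacobiSym.legendreSym.to_jacobiSym] at heul
  rw [heul]
  let Q := QuadraticAlgebra (ZMod p) (-(B : ZMod p)) (A : ZMod p)
  let w : Q := ⟨0, 1⟩
  haveI : CharP Q p := by
    refine charP_of_injective_algebraMap (R := ZMod p) (A := Q) ?_ p
    intro x y h
    have := congrArg QuadraticAlgebra.re h
    simpa [Q] using this
  have hw : w ^ p = ⟨-(B : ZMod p) * (lucasU A B m : ZMod p), (lucasU A B p : ZMod p)⟩ := by
    have := lucasU_omega A B p m
    rw [← hm] at this
    exact this
  have hsq : (w + w - algebraMap (ZMod p) Q (A : ZMod p)) ^ 2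
      = algebraMap (ZMod p) Q (((A ^ 2 - 4 * B : ℤ)) : ZMod p) := by
    ext
    · simp [pow_two, w, Q]; ring
    · simp [pow_two, w, Q]; ring
  have hpodd : p = 2 * (p / 2) + 1 := by
    have := hp.eq_two_or_odd; omega
  have h1 : (w + w - algebraMap (ZMod p) Q (A : ZMod p)) ^ p
     = algebraMap (ZMod p) Q ((((A ^ 2 - 4 * B : ℤ)) : ZMod p) ^ (p/2)) *
       (w + w - algebraMap (ZMod p) Q (A : ZMod p)) := by
    have key : ∀ (x : Q) (q : ℕ), q = 2 * (q / 2) + 1 → x ^ q = (x ^ 2) ^ (q / 2) * x := by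
      intro x q hq
      rw [← pow_mul, ← pow_succ, ← hq]
    rw [key _ p hpodd, hsq, map_pow]
  rw [sub_pow_char, add_pow_char, ← map_pow, ZMod.pow_card, hw] at h1
  generalize (((A ^ 2 - 4 * B : ℤ)) : ZMod p) ^ (p/2) = e at h1 ⊢
  have hre := congrArg QuadraticAlgebra.re h1
  have him := congrArg QuadraticAlgebra.im h1
  simp [w, Q] at hre him
  constructor
  · apply mul_left_cancel₀ h2
    linear_combination him
  · linear_combination -hre

theorem sq_cancel (p : ℕ) (hp : p.Prime) (V W : ℤ) (h : (p : ℤ) ^ 2 ∣ V ^ 2 - W ^ 2)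
    (hn : ¬ (p : ℤ) ∣ V + W) : (p : ℤ) ^ 2 ∣ V - W := by
  have hc : IsCoprime ((p : ℤ) ^ 2) (V + W) :=
    ((Nat.prime_iff_prime_int.1 hp).irreducible.coprime_iff_not_dvd.2 hn).pow_left
  apply hc.dvd_of_dvd_mul_left
  rwa [show (V + W) * (V - W) = V ^ 2 - W ^ 2 by ring]

theorem rat_den (p : ℕ) (hp : p.Prime) (k d : ℤ) (hd : ¬ (p : ℤ) ∣ d) :
    ¬ p ∣ ((k : ℚ) / d).den := by
  intro h
  apply hd
  have := Rat.den_dvd k d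
  rw [Rat.divInt_eq_div] at this
  exact (Int.natCast_dvd_natCast.2 h).trans this

theorem lucasU_p_cong (A B : ℤ) (p : ℕ) (hp : p.Prime) (hp2 : p ≠ 2)
    (hpB : ¬ ((p : ℤ) ∣ B * (A ^ 2 - 4 * B))) :
    ratModCast p 2
      ((lucasU A B p : ℚ))
      ((A : ℚ) / 2 * (B : ℚ) ^ ((jacobiSym (A ^ 2 - 4 * B) p - 1) / 2) *
          (lucasU A B (((p : ℤ) - jacobiSym (A ^ 2 - 4 * B) p).toNat) : ℚ) +
        (jacobiSym (A ^ 2 - 4 * B) p : ℚ) * ((B : ℚ) ^ (p - 1) + 1) / 2) := by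
  haveI : Fact p.Prime := ⟨hp⟩
  obtain ⟨m, hm⟩ : ∃ m, p = m + 1 := ⟨p - 1, by have := hp.pos; omega⟩
  have hpp := Nat.prime_iff_prime_int.1 hp
  have hB : ¬ (p : ℤ) ∣ B := fun h => hpB (h.mul_right _)
  have hD : ¬ (p : ℤ) ∣ (A ^ 2 - 4 * B) := fun h => hpB (h.mul_left _)
  have h2 : ¬ (p : ℤ) ∣ 2 := by
    intro h
    exact hp2 ((Nat.prime_dvd_prime_iff_eq hp Nat.prime_two).1 (by exact_mod_cast h))
  have z2 : (2 : ZMod p) ≠ 0 := by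
    intro h; apply h2; rw [← ZMod.intCast_zmod_eq_zero_iff_dvd]; exact_mod_cast h
  have zB : (B : ZMod p) ≠ 0 := by
    intro h; apply hB; rwa [← ZMod.intCast_zmod_eq_zero_iff_dvd]
  have hF : (B : ZMod p) ^ m = 1 := by
    have := ZMod.pow_card_sub_one_eq_one zB
    rwa [show p - 1 = m by omega] at this
  obtain ⟨f, hf⟩ : (p : ℤ) ∣ B ^ m - 1 := by
    rw [← ZMod.intCast_zmod_eq_zero_iff_dvd]; push_cast; rw [hF, sub_self]
  obtain ⟨m1, m2⟩ := lucasU_mod A B p hp2 m hm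
  have hq := lucasU_quad A B m
  have hq' := lucasU_quad A B p
  have hrec : lucasU A B (p + 1) = A * lucasU A B p - B * lucasU A B m := by
    rw [hm]; rfl
  rw [← hm] at hq
  have hj : jacobiSym (A ^ 2 - 4 * B) p = 1 ∨ jacobiSym (A ^ 2 - 4 * B) p = -1 := by
    rw [← jacobiSym.legendreSym.to_jacobiSym]
    apply legendreSym.eq_one_or_neg_one
    intro h; exact hD ((ZMod.intCast_zmod_eq_zero_iff_dvd _ _).1 h)
  rcases hj with hj | hj
  · rw [hj] at m1 m2 ⊢
    have e1 : ((p : ℤ) - 1).toNat = m := by omega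
    have e2 : p - 1 = m := by omega
    rw [e1, e2]
    have z0 : (lucasU A B m : ZMod p) = 0 := by
      have : 2 * (B : ZMod p) * (lucasU A B m : ZMod p) = 0 := by rw [m2]; simp
      simpa [z2, zB] using this
    obtain ⟨g, hg⟩ := (ZMod.intCast_zmod_eq_zero_iff_dvd _ _).1 z0
    obtain ⟨k, hk⟩ := sq_cancel p hp (2 * lucasU A B p - A * lucasU A B m) (B ^ m + 1)
      ⟨(A ^ 2 - 4 * B) * g ^ 2 - f ^ 2, by
        linear_combination 4 * hq + (A ^ 2 - 4 * B) * (lucasU A B m + p * g) * hg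
          - (B ^ m - 1 + p * f) * hf⟩
      (by
        rw [← ZMod.intCast_zmod_eq_zero_iff_dvd]; push_cast; rw [hF, z0, m1]
        intro h
        apply mul_ne_zero z2 z2
        push_cast at h
        linear_combination h)
    refine ⟨(k : ℚ) / (2 : ℤ), ?_, rat_den p hp k 2 h2⟩
    have hk' := congrArg (Int.cast : ℤ → ℚ) hk
    push_cast at hk' ⊢
    norm_num
    linear_combination hk' / 2
  · rw [hj] at m1 m2 ⊢
    have e1 : ((p : ℤ) - (-1)).toNat = p + 1 := by omega
    have e2 : p - 1 = m := by omega
    rw [e1, e2]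
    have z0 : (lucasU A B (p + 1) : ZMod p) = 0 := by
      apply mul_left_cancel₀ z2
      rw [hrec]; push_cast at m1 m2 ⊢; linear_combination 2 * A * m1 - m2
    obtain ⟨g, hg⟩ := (ZMod.intCast_zmod_eq_zero_iff_dvd _ _).1 z0
    have hpw : B ^ p = B ^ m * B := by rw [← pow_succ, ← hm]
    obtain ⟨k, hk⟩ := sq_cancel p hp (A * lucasU A B (p + 1) - 2 * B * lucasU A B p)
      (B * (B ^ m + 1))
      ⟨(A ^ 2 - 4 * B) * g ^ 2 - B ^ 2 * f ^ 2, by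
        rw [hpw] at hq'
        linear_combination 4 * B * hq' + (A ^ 2 - 4 * B) * (lucasU A B (p + 1) + p * g) * hg
          - B ^ 2 * (B ^ m - 1 + p * f) * hf⟩
      (by
        rw [← ZMod.intCast_zmod_eq_zero_iff_dvd]; push_cast; rw [hF, z0, m1]
        intro h
        apply mul_ne_zero (mul_ne_zero z2 z2) zB
        push_cast at h
        linear_combination h)
    have qB : (B : ℚ) ≠ 0 := by
      intro h; apply hB; rw [Int.cast_eq_zero.1 h]; exact dvd_zero _
    refine ⟨((-k : ℤ) : ℚ) / ((2 * B : ℤ) : ℚ), ?_, rat_den p hp (-k) (2 * B) ?_⟩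
    · have hk' := congrArg (Int.cast : ℤ → ℚ) hk
      push_cast at hk' ⊢
      norm_num
      field_simp
      linear_combination -hk'
    · intro h
      rcases hpp.dvd_or_dvd h with h | h
      exacts [h2 h, hB h]
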